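/- Let σ be a permutation sorting |x| nonincreasingly and set w_k = Σ_{j∈C_k} λ_{σ⁻¹(j)}. Then J is linear on the manifold M: for every u = Σ_{k=1}^m c'_k v_k with c'_1, …, c'_m ∈ ℝ (c'_m = 0 if c_m = 0) and ‖u − x‖_∞ < ε_c/2, one has J(u) = Σ_{k=1}^m w_k · c'_k. -/

import Mathlib

open Finset Filter

noncomputable section

/-- The sign of a real number, with the convention `sgn 0 = 1`. -/
def sgn (t : ℝ) : ℝ := if t < 0 then -1 else 1

/-- A permutation sorting the absolute values of `β` in nonincreasing order. -/
def sortPerm {p : ℕ} (β : Fin p → ℝ) : Equiv.Perm (Fin p) :=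
  (Fin.revPerm).trans (Tuple.sort fun j => |β j|)

/-- The sorted ℓ₁ norm `J(β) = Σ_j λ_j |β|_(j)`. -/
def sortedL1 {p : ℕ} (lam β : Fin p → ℝ) : ℝ :=
  ∑ j, lam j * |β (sortPerm β j)|

/-- `β(z)`: the vector obtained from `β` by replacing entries of the cluster
`{i : |β i| = ck}` by `sign(β i) * z`. -/
def cupd {p : ℕ} (β : Fin p → ℝ) (ck z : ℝ) : Fin p → ℝ :=
  fun i => if |β i| = ck then sgn (β i) * z else β i

/-- The partial sorted ℓ₁ norm `H(z) = J(β(z))`. -/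
def Hfun {p : ℕ} (lam β : Fin p → ℝ) (ck : ℝ) (z : ℝ) : ℝ :=
  sortedL1 lam (cupd β ck z)

/-- `S(w) = Σ_{j ∈ C(w)} λ_{(j)⁻_w}`, where `C(w) = {j : |β(w)_j| = |w|}`. -/
def Sval {p : ℕ} (lam β : Fin p → ℝ) (ck : ℝ) (w : ℝ) : ℝ :=
  ∑ j, if |cupd β ck w j| = |w| then lam ((sortPerm (cupd β ck w))⁻¹ j) else 0

/-- squared Euclidean norm -/
def sqnorm {n : ℕ} (v : Fin n → ℝ) : ℝ := ∑ i, (v i) ^ 2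

/-- `G(z) = (1/2)‖y − Xβ(z)‖² + H(z)`. -/
def Gfun {n p : ℕ} (lam : Fin p → ℝ) (X : Matrix (Fin n) (Fin p) ℝ) (y : Fin n → ℝ)
    (β : Fin p → ℝ) (ck : ℝ) (z : ℝ) : ℝ :=
  (1/2) * sqnorm (fun i => y i - ∑ j, X i j * cupd β ck z j) + Hfun lam β ck z

/-- `x̃ = Σ_{j ∈ C_k} sign(β_j) X_{:j}`. -/
def xtil {n p : ℕ} (X : Matrix (Fin n) (Fin p) ℝ) (β : Fin p → ℝ) (ck : ℝ) : Fin n → ℝ :=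
  fun i => ∑ j, if |β j| = ck then sgn (β j) * X i j else 0

/-- `γ = c_k ω + x̃ᵀ r` where `r = y − Xβ` and `ω = ‖x̃‖²`. -/
def gam {n p : ℕ} (X : Matrix (Fin n) (Fin p) ℝ) (y : Fin n → ℝ) (β : Fin p → ℝ) (ck : ℝ) : ℝ :=
  ck * sqnorm (xtil X β ck) + ∑ i, xtil X β ck i * (y i - ∑ j, X i j * β j)

end

/-- The sorted ℓ₁ norm may be computed along any permutation sorting `|β|` nonincreasingly. -/
theorem sortedL1_eq_of_antitone {p : ℕ} (lam β : Fin p → ℝ) (σ : Equiv.Perm (Fin p))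
    (hσ : Antitone fun j => |β (σ j)|) :
    sortedL1 lam β = ∑ j, lam j * |β (σ j)| := by
  have hrev : Monotone ((fun j => |β j|) ∘ (Fin.revPerm.trans σ)) := fun i j hij =>
    hσ (Fin.rev_le_rev.mpr hij)
  have h := Tuple.unique_monotone hrev (Tuple.monotone_sort fun j => |β j|)
  refine Finset.sum_congr rfl fun j _ => ?_
  have hj := congrFun h (Fin.rev j)
  simp only [Function.comp_apply, Equiv.trans_apply, Fin.revPerm_apply, Fin.rev_rev] at hj
  simp only [sortPerm, Equiv.trans_apply, Fin.revPerm_apply, hj]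

theorem abs_sgn (t : ℝ) : |sgn t| = 1 := by
  unfold sgn
  split_ifs <;> simp

theorem abs_mul_sgn (t : ℝ) : |t| * sgn t = t := by
  unfold sgn
  split_ifs with h
  · rw [abs_of_neg h]; ring
  · rw [abs_of_nonneg (not_lt.mp h)]; ring

/-- `J` is linear on the manifold `M`: for every `u = Σ_k c'_k v_k`
(with `c'_m = 0` if `c_m = 0`) satisfying `‖u − x‖_∞ < ε_c/2`, one has
`J(u) = Σ_k w_k c'_k`, where `w_k = Σ_{j ∈ C_k} λ_{σ⁻¹(j)}` for a permutation `σ`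
sorting `|x|` nonincreasingly. -/
theorem sorted_l1_linear_on_manifold
    {p m : ℕ} (hp : 0 < p) (hm : 0 < m)
    (lam : Fin p → ℝ)
    (hlam_mono : ∀ i j : Fin p, i ≤ j → lam j ≤ lam i)
    (hlam_nonneg : ∀ j, 0 ≤ lam j)
    (x : Fin p → ℝ) (c : Fin m → ℝ)
    (hc_anti : StrictAnti c) (hc_nonneg : ∀ i, 0 ≤ c i)
    (h_attain : ∀ i, ∃ j, |x j| = c i)
    (h_cover : ∀ j, ∃ i, |x j| = c i)
    (ε : ℝ) (hε_pos : 0 < ε)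
    (hε_sep : ∀ i j, i ≠ j → ε < |c i - c j|)
    (hε_min : ∀ i, c i ≠ 0 → ε < c i)
    (σ : Equiv.Perm (Fin p))
    (hσ : ∀ i j : Fin p, i ≤ j → |x (σ j)| ≤ |x (σ i)|)
    (c' : Fin m → ℝ)
    (hc'_zero : c ⟨m - 1, by omega⟩ = 0 → c' ⟨m - 1, by omega⟩ = 0)
    (u : Fin p → ℝ)
    (hu : u = fun j => ∑ i, c' i * (if |x j| = c i then sgn (x j) else 0))
    (h_close : ∀ j, |u j - x j| < ε / 2) :
    sortedL1 lam u = ∑ i, (∑ j, if |x j| = c i then lam (σ⁻¹ j) else 0) * c' i := by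
  choose k hk using h_cover
  have hki : ∀ j i, |x j| = c i ↔ k j = i := fun j i => by
    rw [hk j, hc_anti.injective.eq_iff]
  have hu_apply : ∀ j, u j = c' (k j) * sgn (x j) := fun j => by
    simp [hu, hki]
  have hc'_close : ∀ i, |c' i - c i| < ε / 2 := fun i => by
    obtain ⟨j, hj⟩ := h_attain i
    have hx : u j - x j = (c' i - c i) * sgn (x j) := by
      rw [hu_apply, (hki j i).mp hj, sub_mul, ← hj, abs_mul_sgn]
    simpa [hx, abs_mul, abs_sgn] using h_close j
  have hc'_nonneg : ∀ i, 0 ≤ c' i := fun i => by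
    by_cases hi : c i = 0
    · have hlast : i = ⟨m - 1, by omega⟩ := by
        by_contra hne
        have hlt : i < ⟨m - 1, by omega⟩ :=
          lt_of_le_of_ne (Fin.le_def.mpr (Nat.le_sub_one_of_lt i.isLt)) hne
        linarith [hc_anti hlt, hc_nonneg ⟨m - 1, by omega⟩]
      subst hlast
      exact (hc'_zero hi).ge
    · linarith [hε_min i hi, (abs_lt.mp (hc'_close i)).1]
  have hc'_anti : Antitone c' := fun i j hij => by
    rcases hij.eq_or_lt with rfl | hlt
    · exact le_rfl
    · have hsep := hε_sep i j hlt.ne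
      rw [abs_of_pos (sub_pos.mpr (hc_anti hlt))] at hsep
      linarith [(abs_lt.mp (hc'_close i)).1, (abs_lt.mp (hc'_close j)).2]
  have hu_abs : ∀ j, |u j| = c' (k j) := fun j => by
    rw [hu_apply, abs_mul, abs_sgn, mul_one, abs_of_nonneg (hc'_nonneg _)]
  have hu_sorted : Antitone fun j => |u (σ j)| := fun i j hij => by
    simp only [hu_abs]
    have hle := hσ i j hij
    rw [hk, hk, hc_anti.le_iff_ge] at hle
    exact hc'_anti hle
  rw [sortedL1_eq_of_antitone lam u σ hu_sorted, ← Equiv.sum_comp σ⁻¹]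
  simp only [Finset.sum_mul, hki]
  rw [Finset.sum_comm]
  simp [hu_abs, ite_mul]
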